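/- If x is a position in Moore's nim(n, ≤k) with n > k and some column sum M(x)_j not congruent to 0 mod k+1, then there exists a move from x (reducing at most k piles, each by a positive amount) to a position x' all of whose column sums are congruent to 0 mod k+1. -/

import Mathlib

/-- The `j`-th binary digit of `m`. -/
def digit (m j : ℕ) : ℕ := m / 2 ^ j % 2

/-- The `j`-th column sum of the Bouton matrix of a position. -/
def colSum {n : ℕ} (x : Fin n → ℕ) (j : ℕ) : ℕ := ∑ i, digit (x i) j

/-- A move of classical nim: strictly reduce exactly one pile. -/
def NimMove {n : ℕ} (x y : Fin n → ℕ) : Prop :=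
  ∃ i, y i < x i ∧ ∀ j, j ≠ i → y j = x j

/-- A move of Moore's nim(n, ≤k): strictly reduce at least one and at most `k` piles. -/
def MooreMove (k : ℕ) {n : ℕ} (x y : Fin n → ℕ) : Prop :=
  ∃ S : Finset (Fin n), S.Nonempty ∧ S.card ≤ k ∧ (∀ i ∈ S, y i < x i) ∧ ∀ i ∉ S, y i = x i

/-- A move of exact (n, k) nim: strictly reduce exactly `k` piles. -/
def ExactMove (k : ℕ) {n : ℕ} (x y : Fin n → ℕ) : Prop :=
  ∃ S : Finset (Fin n), S.card = k ∧ (∀ i ∈ S, y i < x i) ∧ ∀ i ∉ S, y i = x i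

/-- N-positions of an impartial game: there is a move to a position all of whose
moves lead to N-positions (i.e. a move to a P-position). -/
inductive NPos {α : Type*} (Move : α → α → Prop) : α → Prop where
  | intro {x y : α} (h : Move x y) (hy : ∀ z, Move y z → NPos Move z) : NPos Move x

/-- P-positions of an impartial game: every move leads to an N-position
(in particular, terminal positions are P-positions). -/
def PPos {α : Type*} (Move : α → α → Prop) (x : α) : Prop :=
  ∀ y, Move x y → NPos Move y

lemma digit_add_aux (m y d j : ℕ) (hy : y < 2 ^ m) (hd : d ≤ 1) :
    digit (y + 2 ^ m * d) j = digit y j + (if j = m then d else 0) := by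
  unfold digit
  obtain rfl | rfl : d = 0 ∨ d = 1 := by omega
  · simp
  · rcases lt_trichotomy j m with h | h | h
    · obtain ⟨e, rfl⟩ : ∃ e, m = j + 1 + e := ⟨m - (j + 1), by omega⟩
      have h1 : y + 2 ^ (j + 1 + e) * 1 = y + 2 ^ j * (2 * 2 ^ e) := by ring
      rw [h1, Nat.add_mul_div_left _ _ (by positivity), if_neg (by omega)]
      omega
    · subst h
      rw [Nat.add_mul_div_left _ _ (by positivity), Nat.div_eq_of_lt hy]
      simp
    · have h2 : 2 ^ (m + 1) ≤ 2 ^ j := Nat.pow_le_pow_right (by norm_num) h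
      rw [pow_succ] at h2
      rw [Nat.div_eq_of_lt (by omega), Nat.div_eq_of_lt (by omega), if_neg (by omega)]

lemma column_step {n k : ℕ} (b : Fin n → ℕ) (hb : ∀ i, b i ≤ 1) (S : Finset (Fin n))
    (hS : S.card ≤ k) :
    ∃ (S' : Finset (Fin n)) (d : Fin n → ℕ), S ⊆ S' ∧ S'.card ≤ k ∧ (∀ i, d i ≤ 1) ∧
      (∀ i, i ∉ S' → d i = b i) ∧ (∀ i, i ∈ S' → i ∉ S → d i = 0 ∧ b i = 1) ∧
      (∑ i, d i) % (k + 1) = 0 := by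
  classical
  set F : Finset (Fin n) := Finset.univ.filter (fun i => i ∉ S ∧ b i = 1) with hF
  by_cases h : ∃ t, t ≤ S.card ∧ (F.card + t) % (k + 1) = 0
  · obtain ⟨t, ht, hm⟩ := h
    obtain ⟨U, hU, rfl⟩ := Finset.exists_subset_card_eq ht
    refine ⟨S, fun i => if i ∈ F ∪ U then 1 else 0, subset_rfl, hS, ?_, ?_, ?_, ?_⟩
    · intro i; dsimp only; split_ifs <;> omega
    · intro i hi
      have h1 := hb i
      have h2 : i ∉ U := fun h => hi (hU h)
      by_cases h3 : b i = 1
      · simp [hF, hi, h2, h3]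
      · simp [hF, hi, h2, h3]; omega
    · intro i h1 h2; exact absurd h1 h2
    · rw [← Finset.card_filter]
      have hdis : Disjoint F U := by
        rw [Finset.disjoint_left]
        intro i hi hu
        exact (Finset.mem_filter.1 hi).2.1 (hU hu)
      rw [Finset.filter_mem_eq_inter, Finset.univ_inter, Finset.card_union_of_disjoint hdis]
      exact hm
  · have hr : F.card % (k + 1) + S.card ≤ k := by
      by_contra hc
      apply h
      have hlt : F.card % (k + 1) < k + 1 := Nat.mod_lt _ (Nat.succ_pos k)
      refine ⟨k + 1 - F.card % (k + 1), by omega, ?_⟩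
      have h0 := Nat.div_add_mod F.card (k + 1)
      have : F.card + (k + 1 - F.card % (k + 1)) = (k + 1) * (F.card / (k + 1) + 1) := by
        rw [mul_add]; omega
      rw [this, Nat.mul_mod_right]
    obtain ⟨R, hR, hRc⟩ := Finset.exists_subset_card_eq (Nat.mod_le F.card (k + 1))
    refine ⟨S ∪ R, fun i => if i ∈ F \ R then 1 else 0, Finset.subset_union_left, ?_, ?_, ?_, ?_, ?_⟩
    · have := Finset.card_union_le S R
      omega
    · intro i; dsimp only; split_ifs <;> omega
    · intro i hi
      have h1 := hb i
      simp only [Finset.mem_union, not_or] at hi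
      by_cases h3 : b i = 1
      · simp [hF, hi, h3]
      · simp [hF, hi, h3]; omega
    · intro i h1 h2
      have h3 : i ∈ R := (Finset.mem_union.1 h1).resolve_left h2
      exact ⟨by simp [h3], (Finset.mem_filter.1 (hR h3)).2.2⟩
    · rw [← Finset.card_filter, Finset.filter_mem_eq_inter, Finset.univ_inter,
        Finset.card_sdiff_of_subset hR, hRc]
      have h0 := Nat.div_add_mod F.card (k + 1)
      have : F.card - F.card % (k + 1) = (k + 1) * (F.card / (k + 1)) := by omega
      rw [this, Nat.mul_mod_right]

lemma moore_aux {n k : ℕ} (m : ℕ) : ∀ (x : Fin n → ℕ) (S : Finset (Fin n)), S.card ≤ k →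
    (∀ i, i ∉ S → x i < 2 ^ m) →
    ∃ (T : Finset (Fin n)) (y : Fin n → ℕ), S ⊆ T ∧ T.card ≤ k ∧ (∀ i, y i < 2 ^ m) ∧
      (∀ i, i ∉ T → y i = x i) ∧ (∀ i, i ∈ T → i ∉ S → y i < x i) ∧
      ∀ j, colSum y j % (k + 1) = 0 := by
  induction m with
  | zero =>
    intro x S hS hx
    refine ⟨S, fun _ => 0, subset_rfl, hS, by simp, ?_, ?_, ?_⟩
    · intro i hi
      have := hx i hi
      simp at this
      simp [this]
    · intro i h1 h2; exact absurd h1 h2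
    · intro j; simp [colSum, digit]
  | succ m ih =>
    intro x S hS hx
    obtain ⟨S', d, hSS, hS'k, hd1, hdb, hd0, hsum⟩ :=
      column_step (fun i => digit (x i) m) (fun i => by unfold digit; omega) S hS
    have hpos : 0 < 2 ^ m := by positivity
    obtain ⟨T, y, hST, hTk, hy, hyT, hyS, hcol⟩ := ih (fun i => x i % 2 ^ m) S' hS'k
      (fun i _ => Nat.mod_lt _ hpos)
    have hxd : ∀ i, i ∉ S → x i = x i % 2 ^ m + 2 ^ m * digit (x i) m := by
      intro i hi
      have h1 := hx i hi
      rw [pow_succ] at h1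
      have h2 : x i / 2 ^ m < 2 := Nat.div_lt_of_lt_mul h1
      unfold digit
      rw [Nat.mod_eq_of_lt h2, Nat.mod_add_div]
    refine ⟨T, fun i => y i + 2 ^ m * d i, hSS.trans hST, hTk, ?_, ?_, ?_, ?_⟩
    · intro i
      have h1 := hy i
      have h2 := Nat.mul_le_mul_left (2 ^ m) (hd1 i)
      rw [pow_succ]; dsimp only; omega
    · intro i hi
      have h1 : i ∉ S' := fun h => hi (hST h)
      have h2 : i ∉ S := fun h => h1 (hSS h)
      have h3 := hxd i h2
      have h4 := hyT i hi
      have h5 := hdb i h1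
      dsimp only at h4 h5 ⊢
      rw [h4, h5, ← h3]
    · intro i hi hiS
      have h3 := hxd i hiS
      by_cases h1 : i ∈ S'
      · obtain ⟨h4, h5⟩ := hd0 i h1 hiS
        have h6 := hy i
        dsimp only at h5 ⊢
        rw [h5] at h3
        rw [h4]
        omega
      · have h4 := hyS i hi h1
        have h5 := hdb i h1
        dsimp only at h4 h5 ⊢
        rw [h5]
        omega
    · intro j
      have h1 : colSum (fun i => y i + 2 ^ m * d i) j
          = colSum y j + (if j = m then ∑ i, d i else 0) := by
        unfold colSum
        rw [Finset.sum_congr rfl (fun i _ => digit_add_aux m (y i) (d i) j (hy i) (hd1 i)),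
          Finset.sum_add_distrib]
        split_ifs <;> simp
      rw [h1, Nat.add_mod, hcol j]
      split_ifs <;> simp [hsum]

/-- from any position with some column sum ≢ 0 mod k+1 there is a
Moore move to a position with all column sums ≡ 0 mod k+1 (when n > k). -/
theorem moore_move_balances {n k : ℕ} (hnk : k < n) (x : Fin n → ℕ)
    (hx : ∃ j, colSum x j % (k + 1) ≠ 0) :
    ∃ y, MooreMove k x y ∧ ∀ j, colSum y j % (k + 1) = 0 := by
  obtain ⟨T, y, -, hTk, -, hyT, hyS, hcol⟩ := moore_aux (k := k) (∑ i, x i) x ∅ (by simp)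
    (fun i _ => lt_of_le_of_lt
      (Finset.single_le_sum (f := x) (fun _ _ => Nat.zero_le _) (Finset.mem_univ i))
      Nat.lt_two_pow_self)
  refine ⟨y, ⟨T, ?_, hTk, fun i hi => hyS i hi (by simp), hyT⟩, hcol⟩
  rw [Finset.nonempty_iff_ne_empty]
  rintro rfl
  obtain ⟨j, hj⟩ := hx
  have : y = x := funext fun i => hyT i (by simp)
  exact hj (this ▸ hcol j)
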